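/- There exist α ∈ (0, 1/2) and C > 0 such that the following holds. Let s satisfy (1 − α)/2 < s < 1/2, let (εₙ) be a sequence of positive reals with εₙ → 0, and for each n let θₙ be a classical solution of the regularized fractional Burgers equation with viscosity εₙ on ℝ × [−1, 0] with |θₙ| ≤ 1 on ℝ × [−1, 0]. If u : ℝ → ℝ is such that θₙ(x, 0) → u(x) for Lebesgue-almost every x ∈ ℝ, then u agrees almost everywhere with a function v satisfying |v(x) − v(y)| ≤ C|x − y|^α for all x, y ∈ ℝ. -/

import Mathlib

open MeasureTheory Real Set Filter

/-- The normalizing constant of the 1-D fractional Laplacian. -/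
noncomputable def fracC (s : ℝ) : ℝ :=
  (4 : ℝ) ^ s * Real.Gamma (1 / 2 + s) / (Real.sqrt Real.pi * |Real.Gamma (-s)|)

/-- The fractional Laplacian `(-Δ)^s u (x)`. -/
noncomputable def fracLap (s : ℝ) (u : ℝ → ℝ) (x : ℝ) : ℝ :=
  fracC s * ∫ y : ℝ, (u x - u y) / |x - y| ^ (1 + 2 * s)

/-- A classical solution of the regularized fractional Burgers equation
`θ_t + θ θ_x + (-Δ)^s θ - ε₁ θ_xx = 0` on a set `D ⊆ ℝ × ℝ` (points written `(x, t)`):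
a bounded continuous function, continuously differentiable in `t` and twice continuously
differentiable in `x`, satisfying the equation at every point of `D`, where the fractional
Laplacian (acting in `x`) is given by an absolutely convergent integral. -/
structure IsClassicalSolution (s ε₁ : ℝ) (θ : ℝ → ℝ → ℝ) (D : Set (ℝ × ℝ)) : Prop where
  bounded : ∃ B : ℝ, ∀ p ∈ D, |θ p.1 p.2| ≤ B
  cont : ContinuousOn (fun p : ℝ × ℝ => θ p.1 p.2) D
  diff_t : ∀ p ∈ D, DifferentiableAt ℝ (fun t => θ p.1 t) p.2
  cont_dt : ContinuousOn (fun p : ℝ × ℝ => deriv (fun t => θ p.1 t) p.2) D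
  diff_x : ∀ p ∈ D, DifferentiableAt ℝ (fun x => θ x p.2) p.1
  diff_xx : ∀ p ∈ D, DifferentiableAt ℝ (deriv fun x => θ x p.2) p.1
  cont_dx : ContinuousOn (fun p : ℝ × ℝ => deriv (fun x => θ x p.2) p.1) D
  cont_dxx : ContinuousOn (fun p : ℝ × ℝ => deriv (deriv fun x => θ x p.2) p.1) D
  integrable : ∀ p ∈ D,
    Integrable fun y : ℝ => (θ p.1 p.2 - θ y p.2) / |p.1 - y| ^ (1 + 2 * s)
  eqn : ∀ p ∈ D,
    deriv (fun t => θ p.1 t) p.2 + θ p.1 p.2 * deriv (fun x => θ x p.2) p.1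
      + fracLap s (fun x => θ x p.2) p.1
      - ε₁ * deriv (deriv fun x => θ x p.2) p.1 = 0

/-!
Doubling of variables with a modulus of continuity: for every `ρ > 0`,
`θ x t - θ y t ≤ 2 * (|x - y| + (ρ - t) ^ (1 / (2 * s))) ^ α` for `t ∈ [-1, 0]`.
Subtracting a small multiple of the coercive weight `log (1 + x ^ 2) + log (1 + y ^ 2)` makes the
excess attain its maximum. If the excess there is positive then, as `|θ| ≤ 1`, the base of the
power is below `1`; in particular the maximum is not at the initial time. At the maximum the
viscous term has a good sign up to the weight, the convection term is at most `ω' * (θ x - θ y)`,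
and the nonlocal term, which acts on the odd function `p ↦ θ (m + p) - θ (m - p)`, gains at least
`fracC s * (|x - y| / 2) ^ (-(2 * s))` times half the modulus, again up to the weight. Because
`1 - α < 2 * s` and `α` is small compared with `fracC s`, this gain exceeds both the convection and
the decay of the modulus in time, which is a contradiction.

The estimate does not depend on the viscosity. Letting `ρ → 0` at `t = 0` gives
`θ x 0 - θ y 0 ≤ 2 * |x - y| ^ α`, which passes to almost everywhere limits.
-/

section FracC

theorem fracC_nonneg {s : ℝ} (hs : -1 / 2 ≤ s) : 0 ≤ fracC s := by
  have hΓ : 0 ≤ Gamma (1 / 2 + s) := Gamma_nonneg_of_nonneg (by linarith)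
  unfold fracC
  positivity

theorem neg_ne_neg_natCast {s : ℝ} (hs : 0 < s) (hs' : s < 1) (m : ℕ) : -s ≠ -m := by
  intro h
  have h0 : (0 : ℝ) < m := by linarith
  have h1 : (m : ℝ) < 1 := by linarith
  norm_cast at h0 h1
  lia

theorem fracC_pos {s : ℝ} (hs : 0 < s) (hs' : s < 1) : 0 < fracC s := by
  have hΓ' : Gamma (-s) ≠ 0 := Gamma_ne_zero (neg_ne_neg_natCast hs hs')
  unfold fracC
  positivity

theorem continuousAt_fracC {s : ℝ} (hs : 0 < s) (hs' : s < 1) : ContinuousAt fracC s := by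
  have hΓ : ContinuousAt (fun s : ℝ => Gamma (1 / 2 + s)) s :=
    ((differentiableAt_Gamma fun m h => by
      linarith [m.cast_nonneg (α := ℝ)]).continuousAt (x := 1 / 2 + s)).comp (by fun_prop)
  have hΓ' : ContinuousAt (fun s : ℝ => Gamma (-s)) s :=
    (differentiableAt_Gamma (neg_ne_neg_natCast hs hs')).continuousAt.comp continuousAt_neg
  have h4 : ContinuousAt (fun s : ℝ => (4 : ℝ) ^ s) s :=
    (continuous_const_rpow four_ne_zero).continuousAt
  refine (h4.mul hΓ).div (continuousAt_const.mul hΓ'.abs) ?_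
  have := Gamma_ne_zero (neg_ne_neg_natCast hs hs')
  positivity

theorem exists_le_fracC_near {s₀ : ℝ} (hs : 0 < s₀) (hs' : s₀ < 1) :
    ∃ c η : ℝ, 0 < c ∧ 0 < η ∧ ∀ s, |s - s₀| < η → c ≤ fracC s := by
  have hpos := fracC_pos hs hs'
  obtain ⟨η, hη, hc⟩ := Metric.eventually_nhds_iff.1
    ((continuousAt_fracC hs hs').eventually (lt_mem_nhds (half_lt_self hpos)))
  exact ⟨fracC s₀ / 2, η, half_pos hpos, hη, fun s h => (hc h).le⟩

end FracC

section FracIntegrable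

/-- Absolute convergence of the integral defining `fracLap s u x`. -/
def FracIntegrable (s : ℝ) (u : ℝ → ℝ) (x : ℝ) : Prop :=
  Integrable fun y : ℝ => (u x - u y) / |x - y| ^ (1 + 2 * s)

variable {s x : ℝ} {u v : ℝ → ℝ}

theorem FracIntegrable.sub (hu : FracIntegrable s u x) (hv : FracIntegrable s v x) :
    FracIntegrable s (fun y => u y - v y) x :=
  (Integrable.sub hu hv).congr <| ae_of_all _ fun y => by simp only [Pi.sub_apply]; ring

theorem fracLap_sub (hu : FracIntegrable s u x) (hv : FracIntegrable s v x) :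
    fracLap s (fun y => u y - v y) x = fracLap s u x - fracLap s v x := by
  simp only [fracLap]
  rw [← mul_sub, ← integral_sub hu hv]
  congr 2 with y
  ring

theorem abs_affine_sub_affine {σ : ℝ} (hσ : |σ| = 1) (m x y : ℝ) :
    |(m + σ * x) - (m + σ * y)| = |x - y| := by
  rw [add_sub_add_left_eq_sub, ← mul_sub, abs_mul, hσ, one_mul]

theorem FracIntegrable.comp_affine {m σ : ℝ} (hσ : |σ| = 1)
    (hu : FracIntegrable s u (m + σ * x)) : FracIntegrable s (fun p => u (m + σ * p)) x := by
  have hσ0 : σ ≠ 0 := by rintro rfl; simp at hσ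
  refine ((Integrable.comp_add_left hu m).comp_mul_left' hσ0).congr <| ae_of_all _ fun y => ?_
  simp only [abs_affine_sub_affine hσ]

theorem fracLap_comp_affine {m σ : ℝ} (hσ : |σ| = 1) :
    fracLap s (fun p => u (m + σ * p)) x = fracLap s u (m + σ * x) := by
  set F : ℝ → ℝ := fun y => (u (m + σ * x) - u y) / |m + σ * x - y| ^ (1 + 2 * s) with hF
  have hF' (y : ℝ) : (u (m + σ * x) - u (m + σ * y)) / |x - y| ^ (1 + 2 * s) = F (m + σ * y) := by
    simp only [hF, abs_affine_sub_affine hσ]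
  simp only [fracLap, hF']
  rw [Measure.integral_comp_mul_left (fun y => F (m + y)), integral_add_left_eq_self, abs_inv, hσ,
    inv_one, one_smul]

end FracIntegrable

section Integrals

theorem integral_eq_setIntegral_Ioi_add_comp_neg {f : ℝ → ℝ} (hf : Integrable f) :
    ∫ x, f x = ∫ x in Ioi 0, (f x + f (-x)) := by
  rw [integral_add hf.integrableOn hf.comp_neg.integrableOn, integral_comp_neg_Ioi, neg_zero,
    add_comm, ← integral_add_compl measurableSet_Iic hf, compl_Iic]

theorem setIntegral_Ioc_neg_eq_zero_of_odd {f : ℝ → ℝ} (hf : ∀ x, f (-x) = -f x) {a : ℝ}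
    (ha : 0 ≤ a) : ∫ x in Ioc (-a) a, f x = 0 := by
  rw [← intervalIntegral.integral_of_le (by linarith)]
  have h := intervalIntegral.integral_comp_neg (a := -a) (b := a) f
  simp only [hf, intervalIntegral.integral_neg, neg_neg] at h
  linarith

theorem integrable_div_abs_rpow {f : ℝ → ℝ} {a b c A B : ℝ} (ha : c - 1 < a) (hb : b < c - 1)
    (hf : Measurable f) (hfA : ∀ x, |f x| ≤ A * |x| ^ a) (hfB : ∀ x, |f x| ≤ B * |x| ^ b) :
    Integrable fun x => f x / |x| ^ c := by
  set g : ℝ → ℝ := fun r => if r ≤ 1 then A * r ^ (a - c) else B * r ^ (b - c) with hg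
  have hg_Ioc : IntegrableOn g (Ioc 0 1) := by
    have h : IntegrableOn (fun r : ℝ => A * r ^ (a - c)) (Ioc 0 1) :=
      ((intervalIntegrable_iff_integrableOn_Ioc_of_le zero_le_one).1
        (intervalIntegral.intervalIntegrable_rpow' (by linarith))).const_mul A
    exact h.congr_fun (fun r hr => (if_pos hr.2).symm) measurableSet_Ioc
  have hg_Ioi : IntegrableOn g (Ioi 1) := by
    have h : IntegrableOn (fun r : ℝ => B * r ^ (b - c)) (Ioi 1) :=
      (integrableOn_Ioi_rpow_of_lt (by linarith) one_pos).const_mul B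
    exact h.congr_fun (fun r hr => (if_neg (not_le.2 hr)).symm) measurableSet_Ioi
  have hg_int : Integrable fun x : ℝ => g ‖x‖ := by
    rw [integrable_fun_norm_addHaar, ← Ioc_union_Ioi_eq_Ioi zero_le_one]
    simpa using hg_Ioc.union hg_Ioi
  refine hg_int.mono' (hf.div (by fun_prop)).aestronglyMeasurable ?_
  filter_upwards [Measure.ae_ne volume 0] with x hx
  have hx' : 0 < |x| := abs_pos.2 hx
  rw [norm_div, norm_eq_abs, norm_eq_abs, abs_of_nonneg (rpow_nonneg hx'.le c), hg]
  dsimp only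
  split_ifs
  · rw [norm_eq_abs, rpow_sub hx', ← mul_div_assoc]
    gcongr
    exact hfA x
  · rw [norm_eq_abs, rpow_sub hx', ← mul_div_assoc]
    gcongr
    exact hfB x

end Integrals

section OddDissipation

theorem integrableOn_Ioi_add_rpow {s a : ℝ} (hs : 0 < s) (ha : 0 < a) :
    IntegrableOn (fun p => (p + a) ^ (-(1 + 2 * s))) (Ioi 0) :=
  integrableOn_add_rpow_Ioi_of_lt (by linarith) (by linarith)

theorem integral_Ioi_add_rpow {s a : ℝ} (hs : 0 < s) (ha : 0 < a) :
    ∫ p in Ioi 0, (p + a) ^ (-(1 + 2 * s)) = a ^ (-(2 * s)) / (2 * s) := by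
  have h := (measurePreserving_add_right volume a).setIntegral_preimage_emb
    (measurableEmbedding_addRight a) (fun p => p ^ (-(1 + 2 * s))) (Ioi a)
  rw [preimage_add_const_Ioi, sub_self] at h
  rw [h, integral_Ioi_rpow_of_lt (by linarith) ha, neg_div, ← div_neg]
  congr 2 <;> ring

theorem setIntegral_Ioi_zero_comp_sub (f : ℝ → ℝ) (a : ℝ) :
    ∫ p in Ioi 0, f (p - a) = ∫ h in Ioi (-a), f h := by
  have h := (measurePreserving_sub_right volume a).setIntegral_preimage_emb
    (measurableEmbedding_subRight a) f (Ioi (-a))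
  rw [preimage_sub_const_Ioi, neg_add_cancel] at h
  exact h

theorem integrableOn_Ioi_zero_comp_sub {f : ℝ → ℝ} {a : ℝ} (hf : IntegrableOn f (Ioi (-a))) :
    IntegrableOn (fun p => f (p - a)) (Ioi 0) := by
  have h := (measurePreserving_sub_right volume a).integrableOn_comp_preimage
    (measurableEmbedding_subRight a) (f := f) (s := Ioi (-a))
  rw [preimage_sub_const_Ioi, neg_add_cancel] at h
  exact h.2 hf

theorem le_sub_div_add_div {g d f ℓ k K : ℝ} (hk : 0 < k) (hkK : k ≤ K) (hdf : d ≤ f)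
    (hℓ : -ℓ ≤ f) : (2 * g - ℓ) / K - f / k ≤ -d / k + (2 * g + d) / K := by
  have hinv : K⁻¹ ≤ k⁻¹ := inv_anti₀ hk hkK
  have hK : 0 ≤ K⁻¹ := inv_nonneg.2 (hk.le.trans hkK)
  simp only [div_eq_mul_inv]
  nlinarith [mul_le_mul_of_nonneg_right hdf (sub_nonneg.2 hinv),
    mul_le_mul_of_nonneg_right hℓ hK]

/-- Folding the integral along `p ↦ -p`, the increment `G p - G a` enters with the weight
`(p + a) ^ (-(1 + 2 * s)) - |p - a| ^ (-(1 + 2 * s)) ≤ 0`, and the value `2 * G a` with the weight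
`(p + a) ^ (-(1 + 2 * s))`. -/
theorem le_fracLap_of_odd {s a ℓ : ℝ} {G f : ℝ → ℝ} (hs : 0 < s) (ha : 0 < a)
    (hodd : ∀ p, G (-p) = -G p) (hG : FracIntegrable s G a)
    (hf : IntegrableOn (fun h => f h / |h| ^ (1 + 2 * s)) (Ioi (-a)))
    (hle : ∀ p, 0 < p → G p - G a ≤ f (p - a)) (hℓ : ∀ h, -a < h → -ℓ ≤ f h) :
    fracC s * ((2 * G a - ℓ) * (a ^ (-(2 * s)) / (2 * s)) -
      ∫ h in Ioi (-a), f h / |h| ^ (1 + 2 * s)) ≤ fracLap s G a := by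
  have hC : 0 ≤ fracC s := fracC_nonneg (by linarith)
  have hk := integrableOn_Ioi_add_rpow hs ha
  have hf' := integrableOn_Ioi_zero_comp_sub hf
  rw [fracLap]
  refine mul_le_mul_of_nonneg_left ?_ hC
  rw [integral_eq_setIntegral_Ioi_add_comp_neg hG, ← integral_Ioi_add_rpow hs ha,
    ← setIntegral_Ioi_zero_comp_sub, ← integral_const_mul, ← integral_sub (hk.const_mul _) hf']
  refine integral_mono_ae ((hk.const_mul _).sub hf')
    (hG.integrableOn.add hG.comp_neg.integrableOn) ?_
  filter_upwards [ae_restrict_mem measurableSet_Ioi, ae_restrict_of_ae (Measure.ae_ne volume a)]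
    with p (hp : 0 < p) hpa
  have hpa' : 0 < |p - a| := abs_pos.2 (sub_ne_zero.2 hpa)
  have hkK : |p - a| ^ (1 + 2 * s) ≤ (p + a) ^ (1 + 2 * s) :=
    rpow_le_rpow hpa'.le (abs_le.2 ⟨by linarith, by linarith⟩) (by linarith)
  have h := le_sub_div_add_div (g := G a) (rpow_pos_of_pos hpa' _) hkK (hle p hp)
    (hℓ (p - a) (by linarith))
  calc (2 * G a - ℓ) * (p + a) ^ (-(1 + 2 * s)) - f (p - a) / |p - a| ^ (1 + 2 * s)
      = (2 * G a - ℓ) / (p + a) ^ (1 + 2 * s) - f (p - a) / |p - a| ^ (1 + 2 * s) := by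
        rw [rpow_neg (by linarith), div_eq_mul_inv _ ((p + a) ^ _)]
    _ ≤ -(G p - G a) / |p - a| ^ (1 + 2 * s) +
          (2 * G a + (G p - G a)) / (p + a) ^ (1 + 2 * s) := h
    _ = (G a - G p) / |a - p| ^ (1 + 2 * s) + (G a - G (-p)) / |a - -p| ^ (1 + 2 * s) := by
        rw [abs_sub_comm a p, sub_neg_eq_add, add_comm a p, hodd, abs_of_pos (add_pos hp ha)]
        ring

end OddDissipation

section TangentSqrt

/-- The linear function of slope `A` up to `a`, and a multiple of the square root beyond: a
majorant of the increments of a concave modulus whose integral against the odd part of the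
fractional kernel over `(-a, a)` cancels. -/
noncomputable def tangentSqrt (a A B h : ℝ) : ℝ :=
  if h ≤ a then A * h else B * √h

variable {s a A B : ℝ}

theorem measurable_tangentSqrt : Measurable (tangentSqrt a A B) :=
  Measurable.ite measurableSet_Iic (by fun_prop) (by fun_prop)

theorem abs_tangentSqrt_le_abs (ha : 0 < a) (h : ℝ) :
    |tangentSqrt a A B h| ≤ (|A| + |B| / √a) * |h| := by
  rw [tangentSqrt]
  split_ifs with hle
  · rw [abs_mul]
    gcongr
    exact le_add_of_nonneg_right (by positivity)
  · rw [not_le] at hle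
    have h0 : 0 < h := ha.trans hle
    rw [abs_mul, abs_of_nonneg (sqrt_nonneg h), abs_of_pos h0]
    calc |B| * √h = |B| / √a * (√a * √h) := by field_simp
      _ ≤ |B| / √a * (√h * √h) := by gcongr
      _ = |B| / √a * h := by rw [mul_self_sqrt h0.le]
      _ ≤ (|A| + |B| / √a) * h := by
        gcongr
        exact le_add_of_nonneg_left (abs_nonneg A)

theorem abs_tangentSqrt_le_sqrt (ha : 0 < a) {h : ℝ} (hh : -a < h) :
    |tangentSqrt a A B h| ≤ (|A| * √a + |B|) * √|h| := by
  rw [tangentSqrt]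
  split_ifs with hle
  · rw [abs_mul]
    calc |A| * |h| = |A| * (√|h| * √|h|) := by rw [mul_self_sqrt (abs_nonneg h)]
      _ ≤ |A| * (√a * √|h|) := by
        gcongr
        exact abs_le.2 ⟨hh.le, hle⟩
      _ = |A| * √a * √|h| := by ring
      _ ≤ (|A| * √a + |B|) * √|h| := by
        gcongr
        exact le_add_of_nonneg_right (abs_nonneg B)
  · rw [abs_mul, abs_of_nonneg (sqrt_nonneg h), abs_of_pos (ha.trans (not_le.1 hle))]
    gcongr
    exact le_add_of_nonneg_left (by positivity)

theorem integrableOn_tangentSqrt_div (hs : 1 / 4 < s) (hs' : s < 1 / 2) (ha : 0 < a) :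
    IntegrableOn (fun h => tangentSqrt a A B h / |h| ^ (1 + 2 * s)) (Ioi (-a)) := by
  have h_near (h : ℝ) : |(Ioi (-a)).indicator (tangentSqrt a A B) h| ≤
      (|A| + |B| / √a) * |h| ^ (1 : ℝ) := by
    rw [rpow_one]
    exact (norm_indicator_le_norm_self (tangentSqrt a A B) h).trans (abs_tangentSqrt_le_abs ha h)
  have h_far (h : ℝ) : |(Ioi (-a)).indicator (tangentSqrt a A B) h| ≤
      (|A| * √a + |B|) * |h| ^ (1 / 2 : ℝ) := by
    rw [← sqrt_eq_rpow]
    by_cases hh : h ∈ Ioi (-a)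
    · rw [indicator_of_mem hh]
      exact abs_tangentSqrt_le_sqrt ha hh
    · rw [indicator_of_notMem hh, abs_zero]
      positivity
  have hint := integrable_div_abs_rpow (c := 1 + 2 * s) (by linarith) (by linarith)
    (measurable_tangentSqrt.indicator measurableSet_Ioi) h_near h_far
  rw [← integrable_indicator_iff measurableSet_Ioi]
  refine hint.congr (ae_of_all _ fun h => ?_)
  by_cases hh : h ∈ Ioi (-a) <;> simp [hh]

theorem setIntegral_tangentSqrt_div (hs : 1 / 4 < s) (hs' : s < 1 / 2) (ha : 0 < a) :
    ∫ h in Ioi (-a), tangentSqrt a A B h / |h| ^ (1 + 2 * s) =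
      B * a ^ (1 / 2 - 2 * s) / (2 * s - 1 / 2) := by
  have hint := integrableOn_tangentSqrt_div (A := A) (B := B) hs hs' ha
  rw [← Ioc_union_Ioi_eq_Ioi (by linarith : -a ≤ a)] at hint ⊢
  rw [setIntegral_union (Ioc_disjoint_Ioi le_rfl) measurableSet_Ioi hint.left_of_union
    hint.right_of_union]
  have hodd : ∫ h in Ioc (-a) a, tangentSqrt a A B h / |h| ^ (1 + 2 * s) = 0 := by
    rw [← setIntegral_Ioc_neg_eq_zero_of_odd (f := fun h => A * h / |h| ^ (1 + 2 * s))
      (fun h => by rw [abs_neg]; ring) ha.le]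
    refine setIntegral_congr_fun measurableSet_Ioc fun h hh => ?_
    simp only [tangentSqrt, if_pos hh.2]
  have htail : ∫ h in Ioi a, tangentSqrt a A B h / |h| ^ (1 + 2 * s) =
      ∫ h in Ioi a, B * h ^ (-(1 / 2 + 2 * s)) := by
    refine setIntegral_congr_fun measurableSet_Ioi fun h (hh : a < h) => ?_
    have h0 : 0 < h := ha.trans hh
    simp only [tangentSqrt, if_neg (not_le.2 hh), abs_of_pos h0]
    rw [sqrt_eq_rpow, mul_div_assoc, ← rpow_sub h0]
    congr 2
    ring
  rw [hodd, htail, zero_add, integral_const_mul, integral_Ioi_rpow_of_lt (by linarith) ha,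
    neg_div, ← div_neg, mul_div_assoc]
  congr 3 <;> ring

end TangentSqrt

section HolderModulus

/-- The modulus of continuity `2 * (ξ + r) ^ α`: a Hölder modulus regularized at scale `r`. -/
noncomputable def holderModulus (α r ξ : ℝ) : ℝ :=
  2 * (ξ + r) ^ α

variable {α r a ξ : ℝ}

theorem hasDerivAt_holderModulus (h : 0 < ξ + r) :
    HasDerivAt (holderModulus α r) (2 * α * (ξ + r) ^ (α - 1)) ξ := by
  have h1 : HasDerivAt (fun ξ : ℝ => ξ + r) 1 ξ := (hasDerivAt_id ξ).add_const r
  refine ((h1.rpow_const (p := α) (Or.inl h.ne')).const_mul 2).congr_deriv ?_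
  ring

theorem one_add_rpow_le_sqrt {x : ℝ} (hα : 0 ≤ α) (hα' : α ≤ 1 / 2) (hx : 0 ≤ x) :
    (1 + x) ^ α ≤ 1 + 2 * α * √x := by
  have h1 : 1 + x ≤ (1 + √x) ^ (2 : ℝ) := by
    rw [rpow_two]
    nlinarith [sq_sqrt hx, sqrt_nonneg x]
  calc (1 + x) ^ α ≤ ((1 + √x) ^ (2 : ℝ)) ^ α := by gcongr
    _ = (1 + √x) ^ (2 * α) := by rw [← rpow_mul (by positivity)]
    _ ≤ 1 + 2 * α * √x :=
      rpow_one_add_le_one_add_mul_self (by linarith [sqrt_nonneg x]) (by linarith) (by linarith)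

theorem holderModulus_nonneg (hξ : 0 ≤ ξ + r) : 0 ≤ holderModulus α r ξ := by
  unfold holderModulus
  positivity

theorem holderModulus_add {h : ℝ} (hξ : 0 < ξ + r) (hh : -(ξ + r) ≤ h) :
    holderModulus α r (ξ + h) = holderModulus α r ξ * (1 + h / (ξ + r)) ^ α := by
  have h1 : 0 ≤ 1 + h / (ξ + r) := by
    rw [one_add_div hξ.ne']
    exact div_nonneg (by linarith) hξ.le
  rw [holderModulus, holderModulus, mul_assoc, ← mul_rpow hξ.le h1]
  congr 2
  field_simp
  ring

theorem holderModulus_sub_le {h : ℝ} (hα : 0 ≤ α) (hα' : α ≤ 1 / 2) (hr : 0 ≤ r) (ha : 0 < a)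
    (hh : -a < h) :
    holderModulus α r (2 * (a + h)) - holderModulus α r (2 * a) ≤
      tangentSqrt a (2 * α * holderModulus α r (2 * a) / (2 * a + r))
        (2 * α * holderModulus α r (2 * a) / √a) h := by
  have har : 0 < 2 * a + r := by positivity
  have hω : 0 ≤ holderModulus α r (2 * a) := holderModulus_nonneg har.le
  rw [mul_add, holderModulus_add har (by linarith), tangentSqrt]
  split_ifs with hle
  · have h1 : (1 + 2 * h / (2 * a + r)) ^ α ≤ 1 + α * (2 * h / (2 * a + r)) :=
      rpow_one_add_le_one_add_mul_self ((le_div_iff₀ har).2 (by linarith)) hα (by linarith)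
    calc _ ≤ holderModulus α r (2 * a) * (1 + α * (2 * h / (2 * a + r))) -
          holderModulus α r (2 * a) := by gcongr
      _ = _ := by ring
  · have h0 : 0 < h := ha.trans (not_le.1 hle)
    have h1 : 2 * h / (2 * a + r) ≤ h / a := by
      rw [div_le_div_iff₀ har ha]
      nlinarith
    have h2 : (1 + 2 * h / (2 * a + r)) ^ α ≤ 1 + 2 * α * (√h / √a) := by
      rw [← sqrt_div h0.le]
      exact (rpow_le_rpow (by positivity) (by linarith) hα).trans
        (one_add_rpow_le_sqrt hα hα' (by positivity))
    calc _ ≤ holderModulus α r (2 * a) * (1 + 2 * α * (√h / √a)) -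
          holderModulus α r (2 * a) := by gcongr
      _ = _ := by ring

end HolderModulus

section Penalty

/-- The coercive weight `log (1 + x ^ 2)`, which makes maxima on the line attained while its
derivatives and its fractional Laplacian stay bounded. -/
noncomputable def penalty (x : ℝ) : ℝ :=
  log (1 + x ^ 2)

theorem penalty_nonneg (x : ℝ) : 0 ≤ penalty x :=
  log_nonneg (by nlinarith [sq_nonneg x])

theorem hasDerivAt_penalty (x : ℝ) : HasDerivAt penalty (2 * x / (1 + x ^ 2)) x := by
  have h : HasDerivAt (fun x : ℝ => 1 + x ^ 2) (2 * x) x := by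
    simpa using (hasDerivAt_pow 2 x).const_add 1
  exact h.log (by positivity)

theorem differentiable_penalty : Differentiable ℝ penalty :=
  fun x => (hasDerivAt_penalty x).differentiableAt

theorem deriv_penalty : deriv penalty = fun x => 2 * x / (1 + x ^ 2) :=
  funext fun x => (hasDerivAt_penalty x).deriv

theorem abs_deriv_penalty_le (x : ℝ) : |deriv penalty x| ≤ 1 := by
  have h : 0 < 1 + x ^ 2 := by positivity
  rw [deriv_penalty, abs_le, le_div_iff₀ h, div_le_iff₀ h]
  constructor <;> nlinarith [sq_nonneg (x + 1), sq_nonneg (x - 1)]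

theorem hasDerivAt_deriv_penalty (x : ℝ) :
    HasDerivAt (deriv penalty) ((2 - 2 * x ^ 2) / (1 + x ^ 2) ^ 2) x := by
  have h1 : HasDerivAt (fun x : ℝ => 1 + x ^ 2) (2 * x) x := by
    simpa using (hasDerivAt_pow 2 x).const_add 1
  have h2 : HasDerivAt (fun x : ℝ => 2 * x) 2 x := by
    simpa using (hasDerivAt_id x).const_mul 2
  rw [deriv_penalty]
  refine (h2.div h1 (by positivity)).congr_deriv ?_
  ring

theorem differentiable_deriv_penalty : Differentiable ℝ (deriv penalty) :=
  fun x => (hasDerivAt_deriv_penalty x).differentiableAt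

theorem deriv_deriv_penalty_le (x : ℝ) : deriv (deriv penalty) x ≤ 2 := by
  rw [(hasDerivAt_deriv_penalty x).deriv, div_le_iff₀ (by positivity)]
  nlinarith [sq_nonneg x, sq_nonneg (x ^ 2)]

theorem tendsto_penalty_cocompact : Tendsto penalty (cocompact ℝ) atTop := by
  refine tendsto_log_atTop.comp (tendsto_atTop_add_const_left _ 1 ?_)
  simpa only [Function.comp_def, norm_eq_abs, sq_abs] using
    (tendsto_pow_atTop two_ne_zero).comp (tendsto_norm_cocompact_atTop (E := ℝ))

theorem penalty_sub_le (x y : ℝ) : penalty x - penalty y ≤ 2 * log (1 + |x - y|) := by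
  have hy : 0 < 1 + y ^ 2 := by positivity
  have hd : 0 ≤ |x - y| := abs_nonneg _
  have hxy : |x| ≤ |y| + |x - y| := by simpa using abs_add_le y (x - y)
  have hsq : x ^ 2 ≤ (|y| + |x - y|) ^ 2 := by
    rw [← sq_abs x]
    gcongr
  have hx : 1 + x ^ 2 ≤ (1 + y ^ 2) * (1 + |x - y|) ^ 2 := by
    nlinarith [sq_abs y, mul_nonneg hd (sq_nonneg (|y| - 1)), mul_nonneg hd hd,
      mul_nonneg (mul_nonneg hd hd) (sq_nonneg y)]
  have hlog := log_le_log (by positivity) hx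
  rw [log_mul hy.ne' (by positivity), log_pow, Nat.cast_two] at hlog
  exact sub_left_le_of_le_add hlog

theorem log_one_add_le_two_mul_sqrt {x : ℝ} (hx : 0 ≤ x) : log (1 + x) ≤ 2 * √x := by
  have h0 := sqrt_nonneg x
  calc log (1 + x) ≤ log ((1 + √x) ^ 2) :=
        log_le_log (by positivity) (by nlinarith [sq_sqrt hx])
    _ = 2 * log (1 + √x) := by rw [log_pow, Nat.cast_two]
    _ ≤ 2 * √x := by linarith [log_le_sub_one_of_pos (by positivity : 0 < 1 + √x)]

theorem integrable_log_one_add_abs_div {s : ℝ} (hs : 1 / 4 < s) (hs' : s < 1 / 2) :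
    Integrable fun h : ℝ => log (1 + |h|) / |h| ^ (1 + 2 * s) := by
  have habs (h : ℝ) : |log (1 + |h|)| = log (1 + |h|) :=
    abs_of_nonneg (log_nonneg (by linarith [abs_nonneg h]))
  refine integrable_div_abs_rpow (a := 1) (b := 1 / 2) (A := 1) (B := 2) (by linarith)
    (by linarith) (by fun_prop) (fun h => ?_) (fun h => ?_)
  · rw [habs, rpow_one, one_mul]
    linarith [log_le_sub_one_of_pos (by positivity : 0 < 1 + |h|)]
  · rw [habs, ← sqrt_eq_rpow]
    exact log_one_add_le_two_mul_sqrt (abs_nonneg h)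

/-- The integral of the bound of `penalty_sub_le`, for increments at two points, against the
fractional kernel. -/
noncomputable def penaltyCost (s : ℝ) : ℝ :=
  4 * ∫ h : ℝ, log (1 + |h|) / |h| ^ (1 + 2 * s)

theorem penaltyCost_nonneg (s : ℝ) : 0 ≤ penaltyCost s := by
  have h (x : ℝ) : 0 ≤ log (1 + |x|) / |x| ^ (1 + 2 * s) :=
    div_nonneg (log_nonneg (by linarith [abs_nonneg x])) (by positivity)
  exact mul_nonneg zero_le_four (integral_nonneg h)

end Penalty

section OddHolderDissipation

variable {s α r κ a : ℝ} {G : ℝ → ℝ}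

theorem integrableOn_tangentSqrt_add_log_div {A B : ℝ} (hs : 1 / 4 < s) (hs' : s < 1 / 2)
    (ha : 0 < a) :
    IntegrableOn (fun h => (tangentSqrt a A B h + κ * (4 * log (1 + |h|))) / |h| ^ (1 + 2 * s))
      (Ioi (-a)) := by
  refine ((integrableOn_tangentSqrt_div (A := A) (B := B) hs hs' ha).add
    ((integrable_log_one_add_abs_div hs hs').integrableOn.const_mul (κ * 4))).congr_fun
    (fun h _ => ?_) measurableSet_Ioi
  simp only [Pi.add_apply]
  ring

theorem setIntegral_tangentSqrt_add_log_div_le {A ω : ℝ} (hs : 1 / 4 < s) (hs' : s < 1 / 2)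
    (hαs : 4 * α ≤ 2 * s - 1 / 2) (hκ : 0 ≤ κ) (ha : 0 < a) (hω : 0 ≤ ω) :
    ∫ h in Ioi (-a), (tangentSqrt a A (2 * α * ω / √a) h + κ * (4 * log (1 + |h|))) /
      |h| ^ (1 + 2 * s) ≤ ω / 2 * a ^ (-(2 * s)) + κ * penaltyCost s := by
  have hlog := integrable_log_one_add_abs_div hs hs'
  have hlog0 (h : ℝ) : 0 ≤ log (1 + |h|) / |h| ^ (1 + 2 * s) :=
    div_nonneg (log_nonneg (by linarith [abs_nonneg h])) (by positivity)
  have hsplit (h : ℝ) : (tangentSqrt a A (2 * α * ω / √a) h + κ * (4 * log (1 + |h|))) /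
      |h| ^ (1 + 2 * s) = tangentSqrt a A (2 * α * ω / √a) h / |h| ^ (1 + 2 * s) +
        κ * 4 * (log (1 + |h|) / |h| ^ (1 + 2 * s)) := by
    ring
  have hpow : a ^ (1 / 2 - 2 * s) = √a * a ^ (-(2 * s)) := by
    rw [sub_eq_add_neg, rpow_add ha, sqrt_eq_rpow]
  have hmain : 2 * α * ω / √a * a ^ (1 / 2 - 2 * s) / (2 * s - 1 / 2) ≤
      ω / 2 * a ^ (-(2 * s)) := by
    rw [hpow, div_le_iff₀ (by linarith), ← mul_assoc, div_mul_cancel₀ _ (sqrt_pos.2 ha).ne']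
    have := mul_nonneg hω (rpow_nonneg ha.le (-(2 * s)))
    nlinarith
  have htail : κ * 4 * ∫ h in Ioi (-a), log (1 + |h|) / |h| ^ (1 + 2 * s) ≤
      κ * penaltyCost s := by
    rw [mul_assoc, penaltyCost]
    exact mul_le_mul_of_nonneg_left (mul_le_mul_of_nonneg_left
      (setIntegral_le_integral hlog (ae_of_all _ hlog0)) zero_le_four) hκ
  simp only [hsplit]
  rw [integral_add (integrableOn_tangentSqrt_div hs hs' ha) (hlog.integrableOn.const_mul _),
    setIntegral_tangentSqrt_div hs hs' ha, integral_const_mul]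
  exact add_le_add hmain htail

theorem le_fracLap_of_odd_of_holderModulus (hs' : s < 1 / 2) (hα : 0 ≤ α)
    (hαs : 4 * α < 2 * s - 1 / 2) (hr : 0 ≤ r) (hκ : 0 ≤ κ) (ha : 0 < a)
    (hodd : ∀ p, G (-p) = -G p) (hG : FracIntegrable s G a) (hGa : holderModulus α r (2 * a) ≤ G a)
    (hle : ∀ p, 0 < p → G p - G a ≤
      holderModulus α r (2 * p) - holderModulus α r (2 * a) + κ * (4 * log (1 + |p - a|))) :
    fracC s * ((G a - holderModulus α r (2 * a) / 2) * a ^ (-(2 * s)) - κ * penaltyCost s) ≤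
      fracLap s G a := by
  have hs : 1 / 4 < s := by linarith
  set ω := holderModulus α r (2 * a)
  have hω : 0 ≤ ω := holderModulus_nonneg (by positivity)
  have hX : 0 ≤ a ^ (-(2 * s)) := rpow_nonneg ha.le _
  have hincr {h : ℝ} (hh : -a < h) : holderModulus α r (2 * (a + h)) - ω ≤
      tangentSqrt a (2 * α * ω / (2 * a + r)) (2 * α * ω / √a) h :=
    holderModulus_sub_le hα (by linarith) hr ha hh
  have hdiss := le_fracLap_of_odd (ℓ := ω) (by linarith) ha hodd hG
    (integrableOn_tangentSqrt_add_log_div (κ := κ) hs hs' ha)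
    (fun p hp => (hle p hp).trans
      (add_le_add_left (by simpa using hincr (h := p - a) (by linarith)) _))
    (fun h hh => by
      have hω_nonneg : 0 ≤ holderModulus α r (2 * (a + h)) := holderModulus_nonneg (by linarith)
      have hlog : 0 ≤ log (1 + |h|) := log_nonneg (by linarith [abs_nonneg h])
      linarith [hincr hh, mul_nonneg hκ (mul_nonneg zero_le_four hlog)])
  refine le_trans (mul_le_mul_of_nonneg_left ?_ (fracC_nonneg (by linarith))) hdiss
  have hmajorant := setIntegral_tangentSqrt_add_log_div_le (A := 2 * α * ω / (2 * a + r)) hs hs'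
    hαs.le hκ ha hω
  have hgain : (2 * G a - ω) * a ^ (-(2 * s)) ≤ (2 * G a - ω) * (a ^ (-(2 * s)) / (2 * s)) :=
    mul_le_mul_of_nonneg_left (le_div_self hX (by linarith) (by linarith)) (by linarith)
  linarith [mul_nonneg (sub_nonneg.2 hGa) hX]

end OddHolderDissipation

section Doubling

/-- The doubled function `u x - u y`, penalized by a modulus `ω` and a weight `ψ`. -/
def doubled (ω ψ u : ℝ → ℝ) (x y : ℝ) : ℝ :=
  u x - u y - ω |x - y| - (ψ x + ψ y)

/-- `(x₀, y₀)` is a global maximum point of `doubled ω ψ u`. -/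
def IsDoublingMax (ω ψ u : ℝ → ℝ) (x₀ y₀ : ℝ) : Prop :=
  ∀ x y, doubled ω ψ u x y ≤ doubled ω ψ u x₀ y₀

theorem exists_eq_affine_of_ne {x y : ℝ} (hne : x ≠ y) :
    ∃ m σ a : ℝ, |σ| = 1 ∧ 0 < a ∧ x = m + σ * a ∧ y = m + -σ * a := by
  rcases lt_or_gt_of_ne hne with h | h
  · exact ⟨(x + y) / 2, -1, (y - x) / 2, by simp, by linarith, by ring, by ring⟩
  · exact ⟨(x + y) / 2, 1, (x - y) / 2, abs_one, by linarith, by ring, by ring⟩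

theorem abs_affine_sub_affine_neg {σ : ℝ} (hσ : |σ| = 1) {a : ℝ} (ha : 0 ≤ a) (m : ℝ) :
    |m + σ * a - (m + -σ * a)| = 2 * a := by
  rw [show m + σ * a - (m + -σ * a) = σ * (2 * a) by ring, abs_mul, hσ, one_mul,
    abs_of_nonneg (by linarith)]

theorem deriv_deriv_nonpos_of_isLocalMax {f : ℝ → ℝ} {x : ℝ} (hf : ContinuousAt f x)
    (hmax : IsLocalMax f x) : deriv (deriv f) x ≤ 0 := by
  by_contra! hpos
  have hmin := isLocalMin_of_deriv_deriv_pos hpos hmax.deriv_eq_zero hf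
  have heq : f =ᶠ[nhds x] fun _ => f x := by
    filter_upwards [hmax, hmin] with y h1 h2 using le_antisymm h1 h2
  have hzero : deriv (deriv f) x = 0 := by
    simpa using heq.deriv.deriv_eq
  exact hpos.ne' hzero

namespace IsDoublingMax

variable {ω ψ u : ℝ → ℝ} {x₀ y₀ : ℝ}

theorem exists_deriv_eq (hmax : IsDoublingMax ω ψ u x₀ y₀) (hne : x₀ ≠ y₀) {ω' : ℝ}
    (hω : HasDerivAt ω ω' |x₀ - y₀|) (hψ : Differentiable ℝ ψ) (hu : Differentiable ℝ u) :
    ∃ σ : ℝ, |σ| = 1 ∧ deriv u x₀ = σ * ω' + deriv ψ x₀ ∧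
      deriv u y₀ = σ * ω' - deriv ψ y₀ := by
  obtain ⟨σ, hσ, habs⟩ : ∃ σ : ℝ, |σ| = 1 ∧ HasDerivAt (fun x : ℝ => |x|) σ (x₀ - y₀) := by
    rcases lt_or_gt_of_ne (sub_ne_zero.2 hne) with h | h
    · exact ⟨-1, by simp, hasDerivAt_abs_neg h⟩
    · exact ⟨1, abs_one, hasDerivAt_abs_pos h⟩
  have hωx := HasDerivAt.comp (h := fun p => |p - y₀|) x₀ hω (habs.comp_sub_const x₀ y₀)
  have hωy := HasDerivAt.comp (h := fun q => |x₀ - q|) y₀ hω (habs.comp_const_sub x₀ y₀)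
  have hX := (((hu x₀).hasDerivAt.sub_const (u y₀)).sub hωx).sub
    ((hψ x₀).hasDerivAt.add_const (ψ y₀))
  have hY := (((hu y₀).hasDerivAt.const_sub (u x₀)).sub hωy).sub
    ((hψ y₀).hasDerivAt.const_add (ψ x₀))
  have hX0 := IsLocalMax.hasDerivAt_eq_zero (Eventually.of_forall fun p => hmax p y₀) hX
  have hY0 := IsLocalMax.hasDerivAt_eq_zero (Eventually.of_forall fun q => hmax x₀ q) hY
  exact ⟨σ, hσ, by linarith, by linarith⟩

/-- Moving both points together does not change their distance, so `ω` drops out. -/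
theorem deriv_deriv_sub_le (hmax : IsDoublingMax ω ψ u x₀ y₀) (hψ : Differentiable ℝ ψ)
    (hψ' : Differentiable ℝ (deriv ψ)) (hu : Differentiable ℝ u)
    (hu' : Differentiable ℝ (deriv u)) :
    deriv (deriv u) x₀ - deriv (deriv u) y₀ ≤ deriv (deriv ψ) x₀ + deriv (deriv ψ) y₀ := by
  have hshift {f : ℝ → ℝ} (hf : Differentiable ℝ f) (x h : ℝ) :
      HasDerivAt (fun h => f (x + h)) (deriv f (x + h)) h :=
    (hf _).hasDerivAt.comp_const_add x h
  set g : ℝ → ℝ := fun h => u (x₀ + h) - u (y₀ + h) - (ψ (x₀ + h) + ψ (y₀ + h)) with hg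
  have hg1 (h : ℝ) : HasDerivAt g (deriv u (x₀ + h) - deriv u (y₀ + h) -
      (deriv ψ (x₀ + h) + deriv ψ (y₀ + h))) h :=
    ((hshift hu x₀ h).sub (hshift hu y₀ h)).sub ((hshift hψ x₀ h).add (hshift hψ y₀ h))
  have hg2 : HasDerivAt (deriv g) (deriv (deriv u) (x₀ + 0) - deriv (deriv u) (y₀ + 0) -
      (deriv (deriv ψ) (x₀ + 0) + deriv (deriv ψ) (y₀ + 0))) 0 := by
    rw [show deriv g = _ from funext fun h => (hg1 h).deriv]
    exact ((hshift hu' x₀ 0).sub (hshift hu' y₀ 0)).sub ((hshift hψ' x₀ 0).add (hshift hψ' y₀ 0))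
  have hloc : IsLocalMax g 0 := Eventually.of_forall fun h => by
    have := hmax (x₀ + h) (y₀ + h)
    simp only [doubled, add_sub_add_right_eq_sub] at this
    simp only [hg, add_zero]
    linarith
  have h0 := deriv_deriv_nonpos_of_isLocalMax (hg1 0).continuousAt hloc
  rw [hg2.deriv] at h0
  simp only [add_zero] at h0
  linarith

theorem sub_sub_sub_le (hmax : IsDoublingMax ω ψ u x₀ y₀) (x y : ℝ) :
    u x - u y - (u x₀ - u y₀) ≤ ω |x - y| - ω |x₀ - y₀| + (ψ x - ψ x₀) + (ψ y - ψ y₀) := by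
  have := hmax x y
  simp only [doubled] at this
  linarith

/-- The nonlocal difference is that of the odd function `p ↦ u (m + σ * p) - u (m - σ * p)`. -/
theorem le_fracLap_sub_fracLap_of_affine {s α r κ m σ a : ℝ} (hσ : |σ| = 1) (ha : 0 < a)
    (hmax : IsDoublingMax (holderModulus α r) (fun x => κ * penalty x) u
      (m + σ * a) (m + -σ * a))
    (hs' : s < 1 / 2) (hα : 0 ≤ α) (hαs : 4 * α < 2 * s - 1 / 2) (hr : 0 ≤ r) (hκ : 0 ≤ κ)
    (hx : FracIntegrable s u (m + σ * a)) (hy : FracIntegrable s u (m + -σ * a))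
    (hu : holderModulus α r (2 * a) ≤ u (m + σ * a) - u (m + -σ * a)) :
    fracC s * ((u (m + σ * a) - u (m + -σ * a) - holderModulus α r (2 * a) / 2) *
        a ^ (-(2 * s)) - κ * penaltyCost s) ≤
      fracLap s u (m + σ * a) - fracLap s u (m + -σ * a) := by
  have hσ' : |-σ| = 1 := by rwa [abs_neg]
  have hpenalty {τ : ℝ} (hτ : |τ| = 1) (p : ℝ) :
      κ * penalty (m + τ * p) - κ * penalty (m + τ * a) ≤ κ * (2 * log (1 + |p - a|)) := by
    have := mul_le_mul_of_nonneg_left (penalty_sub_le (m + τ * p) (m + τ * a)) hκ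
    rwa [abs_affine_sub_affine hτ, mul_sub] at this
  have hGint := (hx.comp_affine hσ).sub (hy.comp_affine hσ')
  have hdiss := le_fracLap_of_odd_of_holderModulus hs' hα hαs hr hκ ha
    (fun p => by simp only [mul_neg, neg_mul, neg_neg, neg_sub]) hGint hu fun p hp => by
      have := hmax.sub_sub_sub_le (m + σ * p) (m + -σ * p)
      rw [abs_affine_sub_affine_neg hσ hp.le, abs_affine_sub_affine_neg hσ ha.le] at this
      linarith [hpenalty hσ p, hpenalty hσ' p]
  rwa [fracLap_sub (hx.comp_affine hσ) (hy.comp_affine hσ'), fracLap_comp_affine hσ,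
    fracLap_comp_affine hσ'] at hdiss

theorem le_fracLap_sub_fracLap {s α r κ : ℝ}
    (hmax : IsDoublingMax (holderModulus α r) (fun x => κ * penalty x) u x₀ y₀) (hne : x₀ ≠ y₀)
    (hs' : s < 1 / 2) (hα : 0 ≤ α) (hαs : 4 * α < 2 * s - 1 / 2) (hr : 0 ≤ r) (hκ : 0 ≤ κ)
    (hx : FracIntegrable s u x₀) (hy : FracIntegrable s u y₀)
    (hu : holderModulus α r |x₀ - y₀| ≤ u x₀ - u y₀) :
    fracC s * ((u x₀ - u y₀ - holderModulus α r |x₀ - y₀| / 2) * (|x₀ - y₀| / 2) ^ (-(2 * s)) -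
      κ * penaltyCost s) ≤ fracLap s u x₀ - fracLap s u y₀ := by
  obtain ⟨m, σ, a, hσ, ha, rfl, rfl⟩ := exists_eq_affine_of_ne hne
  rw [abs_affine_sub_affine_neg hσ ha.le] at hu ⊢
  rw [mul_div_cancel_left₀ _ two_ne_zero]
  exact le_fracLap_sub_fracLap_of_affine hσ ha hmax hs' hα hαs hr hκ hx hy hu

end IsDoublingMax

end Doubling

section SmoothingScale

/-- The length scale reached by a diffusion of order `2 * s` in the time left before `ρ`. -/
noncomputable def smoothingScale (s ρ t : ℝ) : ℝ :=
  (ρ - t) ^ (1 / (2 * s))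

variable {s α ρ t ξ : ℝ}

theorem smoothingScale_pos (ht : t < ρ) : 0 < smoothingScale s ρ t :=
  rpow_pos_of_pos (sub_pos.2 ht) _

theorem hasDerivAt_smoothingScale (hs : s ≠ 0) (ht : t < ρ) :
    HasDerivAt (smoothingScale s ρ) (-(1 / (2 * s) * smoothingScale s ρ t ^ (1 - 2 * s))) t := by
  have hρt : 0 < ρ - t := sub_pos.2 ht
  have h1 : HasDerivAt (fun t : ℝ => ρ - t) (-1) t := by
    simpa using (hasDerivAt_id t).const_sub ρ
  refine (h1.rpow_const (p := 1 / (2 * s)) (Or.inl hρt.ne')).congr_deriv ?_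
  rw [smoothingScale, ← rpow_mul hρt.le,
    show 1 / (2 * s) * (1 - 2 * s) = 1 / (2 * s) - 1 by field_simp]
  ring

theorem hasDerivAt_holderModulus_smoothingScale (hs : s ≠ 0) (hξ : 0 ≤ ξ) (ht : t < ρ) :
    HasDerivAt (fun t => holderModulus α (smoothingScale s ρ t) ξ)
      (-(2 * α * (ξ + smoothingScale s ρ t) ^ (α - 1) *
        (1 / (2 * s) * smoothingScale s ρ t ^ (1 - 2 * s)))) t := by
  have hpos : 0 < ξ + smoothingScale s ρ t := add_pos_of_nonneg_of_pos hξ (smoothingScale_pos ht)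
  have h := (hasDerivAt_smoothingScale hs ht).const_add ξ
  refine ((h.rpow_const (p := α) (Or.inl hpos.ne')).const_mul 2).congr_deriv ?_
  ring

theorem continuous_holderModulus_smoothingScale (hs : 0 ≤ s) (hα : 0 ≤ α) :
    Continuous fun p : ℝ × ℝ × ℝ => holderModulus α (smoothingScale s p.1 p.2.1) p.2.2 := by
  have hr : Continuous fun p : ℝ × ℝ × ℝ => smoothingScale s p.1 p.2.1 :=
    (by fun_prop : Continuous fun p : ℝ × ℝ × ℝ => p.1 - p.2.1).rpow_const
      fun _ => Or.inr (by positivity)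
  exact ((continuous_snd.snd.add hr).rpow_const fun _ => Or.inr hα).const_mul 2

/-- For `z ≤ 1` the hypothesis `1 - α ≤ 2 * s` gives `z ^ (α - 1) ≤ z ^ (-(2 * s))`, so the
dissipation on the right dominates the convection and the decay of the modulus in time. -/
theorem holderModulus_supersolution {r c D : ℝ} (hs : 1 / 4 ≤ s) (hs' : s < 1 / 2)
    (hαs : 1 - α ≤ 2 * s) (hc : 8 * α ≤ c) (hξ : 0 < ξ) (hr : 0 ≤ r) (hξr : ξ + r ≤ 1)
    (hD : holderModulus α r ξ ≤ D) :
    2 * α * (ξ + r) ^ (α - 1) * (D + 1 / (2 * s) * r ^ (1 - 2 * s)) +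
        6 * α * (D - holderModulus α r ξ) ≤
      c * ((D - holderModulus α r ξ / 2) * (ξ / 2) ^ (-(2 * s))) := by
  have hα : 0 < α := by linarith
  have hz : 0 < ξ + r := by positivity
  obtain ⟨e, he, rfl⟩ : ∃ e, 0 ≤ e ∧ D = holderModulus α r ξ + e :=
    ⟨_, sub_nonneg.2 hD, by ring⟩
  simp only [holderModulus]
  set X := (ξ / 2) ^ (-(2 * s))
  set Ω := (ξ + r) ^ α
  have hz_le_X : (ξ + r) ^ (-(2 * s)) ≤ X :=
    rpow_le_rpow_of_nonpos (by positivity) (by linarith) (by linarith)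
  have hX : 1 ≤ X :=
    (one_le_rpow_of_pos_of_le_one_of_nonpos hz hξr (by linarith)).trans hz_le_X
  have hconv : (ξ + r) ^ (α - 1) ≤ X :=
    (rpow_le_rpow_of_exponent_ge hz hξr (by linarith)).trans hz_le_X
  have hdecay : (ξ + r) ^ (α - 1) * (1 / (2 * s) * r ^ (1 - 2 * s)) ≤ 2 * (Ω * X) := by
    have hs2 : 1 / (2 * s) ≤ 2 := by
      rw [div_le_iff₀ (by linarith)]
      linarith
    calc (ξ + r) ^ (α - 1) * (1 / (2 * s) * r ^ (1 - 2 * s))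
        ≤ (ξ + r) ^ (α - 1) * (2 * (ξ + r) ^ (1 - 2 * s)) := by
          gcongr <;> linarith
      _ = 2 * (Ω * (ξ + r) ^ (-(2 * s))) := by
          rw [mul_left_comm, ← rpow_add hz, ← rpow_add hz]
          congr 2
          ring
      _ ≤ 2 * (Ω * X) := by gcongr
  calc 2 * α * (ξ + r) ^ (α - 1) * (2 * Ω + e + 1 / (2 * s) * r ^ (1 - 2 * s)) +
        6 * α * (2 * Ω + e - 2 * Ω)
      = 2 * α * ((ξ + r) ^ (α - 1) * (2 * Ω + e)) +
        2 * α * ((ξ + r) ^ (α - 1) * (1 / (2 * s) * r ^ (1 - 2 * s))) + 6 * α * (e * 1) := by ring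
    _ ≤ 2 * α * (X * (2 * Ω + e)) + 2 * α * (2 * (Ω * X)) + 6 * α * (e * X) := by gcongr
    _ = 8 * α * ((Ω + e) * X) := by ring
    _ ≤ c * ((Ω + e) * X) := by gcongr
    _ = _ := by ring

end SmoothingScale

section PenalizedMaximum

theorem exists_isMaxOn_sub_penalty {F : ℝ × ℝ × ℝ → ℝ} {T : Set ℝ} {κ B : ℝ} (hT : IsCompact T)
    (hT' : T.Nonempty) (hκ : 0 < κ) (hF : ContinuousOn F (univ ×ˢ univ ×ˢ T))
    (hB : ∀ z ∈ univ ×ˢ univ ×ˢ T, F z ≤ B) :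
    ∃ z₀ ∈ univ ×ˢ univ ×ˢ T,
      IsMaxOn (fun z => F z - (κ * penalty z.1 + κ * penalty z.2.1)) (univ ×ˢ univ ×ˢ T) z₀ := by
  obtain ⟨t, ht⟩ := hT'
  set Φ : ℝ × ℝ × ℝ → ℝ := fun z => F z - (κ * penalty z.1 + κ * penalty z.2.1)
  have hz : ((0 : ℝ), (0 : ℝ), t) ∈ univ ×ˢ univ ×ˢ T := ⟨mem_univ _, mem_univ _, ht⟩
  obtain ⟨K, hK, hKP⟩ := mem_cocompact.1
    (tendsto_penalty_cocompact.eventually_ge_atTop ((B - Φ (0, 0, t)) / κ))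
  have hfar {x : ℝ} (hx : x ∉ K) : B - Φ (0, 0, t) ≤ κ * penalty x := by
    have : (B - Φ (0, 0, t)) / κ ≤ penalty x := hKP hx
    rwa [div_le_iff₀' hκ] at this
  have hΦc : ContinuousOn Φ (univ ×ˢ univ ×ˢ T) := by
    have := differentiable_penalty.continuous
    fun_prop
  refine hΦc.exists_isMaxOn' (isClosed_univ.prod (isClosed_univ.prod hT.isClosed)) hz ?_
  filter_upwards [mem_inf_of_left (hK.prod (hK.prod hT)).compl_mem_cocompact,
    mem_inf_of_right (mem_principal_self _)] with z hzK hzS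
  have hx := mul_nonneg hκ.le (penalty_nonneg z.1)
  have hy := mul_nonneg hκ.le (penalty_nonneg z.2.1)
  have hzB := hB z hzS
  suffices z.1 ∉ K ∨ z.2.1 ∉ K by
    rcases this with h | h <;> linarith [hfar h]
  by_contra! hcon
  exact hzK ⟨hcon.1, hcon.2, hzS.2.2⟩

theorem deriv_nonneg_of_forall_Ioo_le {f : ℝ → ℝ} {f' b t : ℝ} (hf : HasDerivAt f f' t)
    (hb : b < t) (hmax : ∀ y ∈ Ioo b t, f y ≤ f t) : 0 ≤ f' := by
  have h := (hasDerivAt_iff_tendsto_slope.1 hf).mono_left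
    (nhdsWithin_mono t fun y (hy : y ∈ Iio t) => ne_of_lt hy)
  refine ge_of_tendsto h ?_
  filter_upwards [Ioo_mem_nhdsLT hb] with y hy
  rw [slope_def_field]
  exact div_nonneg_of_nonpos (sub_nonpos.2 (hmax y hy)) (sub_nonpos.2 hy.2.le)

end PenalizedMaximum

section Contact

variable {s ε α r ρ κ t x₀ y₀ : ℝ} {θ : ℝ → ℝ → ℝ} {D : Set (ℝ × ℝ)}

theorem IsDoublingMax.mul_deriv_sub_mul_deriv_le {ω ψ u : ℝ → ℝ} {ω' : ℝ}
    (hmax : IsDoublingMax ω ψ u x₀ y₀) (hne : x₀ ≠ y₀) (hω : HasDerivAt ω ω' |x₀ - y₀|)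
    (hω' : 0 ≤ ω') (hψ : Differentiable ℝ ψ) (hψ' : ∀ x, |deriv ψ x| ≤ κ)
    (hu : Differentiable ℝ u) (hx : |u x₀| ≤ 1) (hy : |u y₀| ≤ 1) (hyx : u y₀ ≤ u x₀) :
    u y₀ * deriv u y₀ - u x₀ * deriv u x₀ ≤ ω' * (u x₀ - u y₀) + 2 * κ := by
  obtain ⟨σ, hσ, hdx, hdy⟩ := hmax.exists_deriv_eq hne hω hψ hu
  have hpenalty {z : ℝ} (hz : |u z| ≤ 1) : -(u z * deriv ψ z) ≤ κ :=
    calc -(u z * deriv ψ z) ≤ |u z| * |deriv ψ z| := by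
          rw [← abs_mul]
          exact neg_le_abs _
      _ ≤ 1 * κ := by gcongr; exact hψ' z
      _ = κ := one_mul κ
  have hconv : -σ * (ω' * (u x₀ - u y₀)) ≤ ω' * (u x₀ - u y₀) :=
    mul_le_of_le_one_left (mul_nonneg hω' (sub_nonneg.2 hyx)) ((neg_le_abs σ).trans hσ.le)
  rw [hdx, hdy]
  linarith [hpenalty hx, hpenalty hy]

theorem IsClassicalSolution.deriv_sub_deriv_le (hθ : IsClassicalSolution s ε θ D)
    (hD : ∀ x, (x, t) ∈ D) (hε : 0 ≤ ε) (hs' : s < 1 / 2) (hα : 0 ≤ α)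
    (hαs : 4 * α < 2 * s - 1 / 2) (hr : 0 ≤ r) (hκ : 0 ≤ κ)
    (hmax : IsDoublingMax (holderModulus α r) (fun x => κ * penalty x) (fun x => θ x t) x₀ y₀)
    (hne : x₀ ≠ y₀) (hx : |θ x₀ t| ≤ 1) (hy : |θ y₀ t| ≤ 1)
    (hle : holderModulus α r |x₀ - y₀| ≤ θ x₀ t - θ y₀ t) :
    deriv (θ x₀) t - deriv (θ y₀) t ≤
      2 * α * (|x₀ - y₀| + r) ^ (α - 1) * (θ x₀ t - θ y₀ t) +
        κ * (2 + 4 * ε + fracC s * penaltyCost s) -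
        fracC s * ((θ x₀ t - θ y₀ t - holderModulus α r |x₀ - y₀| / 2) *
          (|x₀ - y₀| / 2) ^ (-(2 * s))) := by
  have hξ : 0 < |x₀ - y₀| + r := add_pos_of_pos_of_nonneg (abs_pos.2 (sub_ne_zero.2 hne)) hr
  have hψ : Differentiable ℝ fun x => κ * penalty x := differentiable_penalty.const_mul κ
  have hψ' : deriv (fun x => κ * penalty x) = fun x => κ * deriv penalty x :=
    deriv_const_mul_field' κ
  have hψ'' : deriv (deriv fun x => κ * penalty x) = fun x => κ * deriv (deriv penalty) x := by
    rw [hψ', deriv_const_mul_field']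
  have hconv := hmax.mul_deriv_sub_mul_deriv_le (κ := κ) hne (hasDerivAt_holderModulus hξ)
    (by positivity) hψ (fun x => by
      rw [hψ', abs_mul, abs_of_nonneg hκ]
      exact mul_le_of_le_one_right hκ (abs_deriv_penalty_le x))
    (fun x => hθ.diff_x _ (hD x)) hx hy
    (sub_nonneg.1 ((holderModulus_nonneg hξ.le).trans hle))
  have hvisc := hmax.deriv_deriv_sub_le hψ (hψ' ▸ differentiable_deriv_penalty.const_mul κ)
    (fun x => hθ.diff_x _ (hD x)) (fun x => hθ.diff_xx _ (hD x))
  simp only [hψ''] at hvisc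
  have hvisc' : ε * (deriv (deriv fun x => θ x t) x₀ - deriv (deriv fun x => θ x t) y₀) ≤
      ε * (κ * 2 + κ * 2) :=
    mul_le_mul_of_nonneg_left (hvisc.trans (by gcongr <;> exact deriv_deriv_penalty_le _)) hε
  have hdiss := hmax.le_fracLap_sub_fracLap hne hs' hα hαs hr hκ (hθ.integrable _ (hD x₀))
    (hθ.integrable _ (hD y₀)) hle
  have hx_eqn := hθ.eqn _ (hD x₀)
  have hy_eqn := hθ.eqn _ (hD y₀)
  simp only at hx_eqn hy_eqn
  linarith

theorem add_lt_one_of_holderModulus_lt_two {ξ : ℝ} (hα : 0 ≤ α) (h : holderModulus α r ξ < 2) :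
    ξ + r < 1 := by
  contrapose! h
  have := one_le_rpow h hα
  rw [holderModulus]
  linarith

theorem sub_lt_one_of_smoothingScale_lt_one (hs : 0 ≤ s) (h : smoothingScale s ρ t < 1) :
    ρ - t < 1 := by
  contrapose! h
  exact one_le_rpow h (by positivity)

theorem IsClassicalSolution.neg_deriv_holderModulus_le
    (hθ : IsClassicalSolution s ε θ (univ ×ˢ Icc (-1) 0)) (hs : s ≠ 0) (hρ : 0 < ρ)
    (ht : t ∈ Ioc (-1) 0)
    (hmax : ∀ τ ∈ Icc (-1) 0,
      θ x₀ τ - θ y₀ τ - holderModulus α (smoothingScale s ρ τ) |x₀ - y₀| ≤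
        θ x₀ t - θ y₀ t - holderModulus α (smoothingScale s ρ t) |x₀ - y₀|) :
    -(2 * α * (|x₀ - y₀| + smoothingScale s ρ t) ^ (α - 1) *
      (1 / (2 * s) * smoothingScale s ρ t ^ (1 - 2 * s))) ≤
      deriv (θ x₀) t - deriv (θ y₀) t := by
  have htime (x : ℝ) : HasDerivAt (θ x) (deriv (θ x) t) t :=
    (hθ.diff_t (x, t) ⟨mem_univ x, Ioc_subset_Icc_self ht⟩).hasDerivAt
  have hmod := hasDerivAt_holderModulus_smoothingScale (α := α) hs (abs_nonneg (x₀ - y₀))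
    (ht.2.trans_lt hρ)
  exact sub_nonneg.1 (deriv_nonneg_of_forall_Ioo_le (((htime x₀).sub (htime y₀)).sub hmod) ht.1
    fun τ hτ => hmax τ ⟨hτ.1.le, hτ.2.le.trans ht.2⟩)

theorem IsClassicalSolution.six_mul_sub_holderModulus_le
    (hθ : IsClassicalSolution s ε θ (univ ×ˢ Icc (-1) 0))
    (hbd : ∀ x, |θ x t| ≤ 1) (hε : 0 ≤ ε) (hs' : s < 1 / 2)
    (hα1 : 1 - α ≤ 2 * s) (hαs : 4 * α < 2 * s - 1 / 2) (hc : 8 * α ≤ fracC s) (hρ : 0 < ρ)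
    (hκ : 0 ≤ κ) (ht : t ∈ Icc (-1) 0)
    (hmax : ∀ x y, ∀ τ ∈ Icc (-1) 0,
      doubled (holderModulus α (smoothingScale s ρ τ)) (fun x => κ * penalty x)
          (fun x => θ x τ) x y ≤
        doubled (holderModulus α (smoothingScale s ρ t)) (fun x => κ * penalty x)
          (fun x => θ x t) x₀ y₀)
    (hlt : holderModulus α (smoothingScale s ρ t) |x₀ - y₀| < θ x₀ t - θ y₀ t) :
    6 * α * (θ x₀ t - θ y₀ t - holderModulus α (smoothingScale s ρ t) |x₀ - y₀|) ≤
      κ * (2 + 4 * ε + fracC s * penaltyCost s) := by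
  have hα : 0 < α := by linarith
  have hr := smoothingScale_pos (s := s) (ht.2.trans_lt hρ)
  have hξr : |x₀ - y₀| + smoothingScale s ρ t < 1 :=
    add_lt_one_of_holderModulus_lt_two hα.le
      (hlt.trans_le (by linarith [(abs_le.1 (hbd x₀)).2, (abs_le.1 (hbd y₀)).1]))
  have hρt : ρ - t < 1 := sub_lt_one_of_smoothingScale_lt_one (by linarith)
    (lt_of_le_of_lt (le_add_of_nonneg_left (abs_nonneg _)) hξr)
  have hne : x₀ ≠ y₀ := by
    rintro rfl
    rw [sub_self, sub_self, abs_zero] at hlt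
    exact hlt.not_ge (holderModulus_nonneg (by positivity))
  have htime := hθ.neg_deriv_holderModulus_le (s := s) (α := α) (x₀ := x₀) (y₀ := y₀)
    (by linarith) hρ ⟨by linarith, ht.2⟩
    fun τ hτ => by simpa only [doubled, sub_le_sub_iff_right] using hmax x₀ y₀ τ hτ
  have hspace := hθ.deriv_sub_deriv_le (fun x => ⟨mem_univ x, ht⟩) hε hs' hα.le hαs hr.le hκ
    (fun x y => hmax x y t ht) hne (hbd x₀) (hbd y₀) hlt.le
  have hsuper := holderModulus_supersolution (by linarith) hs' hα1 hc
    (abs_pos.2 (sub_ne_zero.2 hne)) hr.le hξr.le hlt.le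
  linarith

theorem IsClassicalSolution.continuousOn_sub_holderModulus
    (hθ : IsClassicalSolution s ε θ (univ ×ˢ Icc (-1) 0)) (hs : 0 ≤ s) (hα : 0 ≤ α) :
    ContinuousOn (fun z : ℝ × ℝ × ℝ => θ z.1 z.2.2 - θ z.2.1 z.2.2 -
      holderModulus α (smoothingScale s ρ z.2.2) |z.1 - z.2.1|) (univ ×ˢ univ ×ˢ Icc (-1) 0) := by
  have hmod := (continuous_holderModulus_smoothingScale hs hα).comp
    (f := fun z : ℝ × ℝ × ℝ => (ρ, z.2.2, |z.1 - z.2.1|)) (by fun_prop)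
  have hx := hθ.cont.comp (f := fun z : ℝ × ℝ × ℝ => (z.1, z.2.2)) (by fun_prop)
    fun z (hz : z ∈ univ ×ˢ univ ×ˢ Icc (-1) 0) => ⟨mem_univ _, hz.2.2⟩
  have hy := hθ.cont.comp (f := fun z : ℝ × ℝ × ℝ => (z.2.1, z.2.2)) (by fun_prop)
    fun z (hz : z ∈ univ ×ˢ univ ×ˢ Icc (-1) 0) => ⟨mem_univ _, hz.2.2⟩
  exact (hx.sub hy).sub hmod.continuousOn

theorem sub_sub_holderModulus_le_two {a b ξ : ℝ} (ha : |a| ≤ 1) (hb : |b| ≤ 1) (hξ : 0 ≤ ξ + r) :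
    a - b - holderModulus α r ξ ≤ 2 := by
  linarith [(abs_le.1 ha).2, (abs_le.1 hb).1, holderModulus_nonneg (α := α) hξ]

theorem IsClassicalSolution.sub_le_holderModulus
    (hθ : IsClassicalSolution s ε θ (univ ×ˢ Icc (-1) 0))
    (hbd : ∀ x, ∀ t ∈ Icc (-1) 0, |θ x t| ≤ 1) (hε : 0 ≤ ε) (hs' : s < 1 / 2)
    (hα1 : 1 - α ≤ 2 * s) (hαs : 4 * α < 2 * s - 1 / 2) (hc : 8 * α ≤ fracC s) (hρ : 0 < ρ)
    (ht : t ∈ Icc (-1) 0) (x y : ℝ) :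
    θ x t - θ y t ≤ holderModulus α (smoothingScale s ρ t) |x - y| := by
  have hα : 0 < α := by linarith
  have hs : 0 < s := by linarith
  have hle : ∀ z ∈ univ ×ˢ univ ×ˢ Icc (-1) 0, θ z.1 z.2.2 - θ z.2.1 z.2.2 -
      holderModulus α (smoothingScale s ρ z.2.2) |z.1 - z.2.1| ≤ 2 := fun z hz =>
    sub_sub_holderModulus_le_two (hbd _ _ hz.2.2) (hbd _ _ hz.2.2)
      (add_nonneg (abs_nonneg _) (smoothingScale_pos (hz.2.2.2.trans_lt hρ)).le)
  have hM : 0 ≤ 2 + 4 * ε + fracC s * penaltyCost s := by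
    have := mul_nonneg (fracC_nonneg (s := s) (by linarith)) (penaltyCost_nonneg s)
    linarith
  by_contra! hlt
  obtain ⟨κ, hκ, hκM⟩ := exists_pos_mul_lt (mul_pos (mul_pos (by norm_num : (0 : ℝ) < 6) hα)
    (sub_pos.2 hlt)) (2 + 4 * ε + fracC s * penaltyCost s + 6 * α * (penalty x + penalty y))
  obtain ⟨⟨x₀, y₀, t₀⟩, hz₀, hmax⟩ := exists_isMaxOn_sub_penalty isCompact_Icc ⟨t, ht⟩ hκ
    (hθ.continuousOn_sub_holderModulus hs.le hα.le) hle
  have hmax' (x y τ : ℝ) (hτ : τ ∈ Icc (-1) 0) :=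
    isMaxOn_iff.1 hmax (x, y, τ) ⟨mem_univ _, mem_univ _, hτ⟩
  have hexcess : θ x t - θ y t - holderModulus α (smoothingScale s ρ t) |x - y| -
      κ * (penalty x + penalty y) ≤
      θ x₀ t₀ - θ y₀ t₀ - holderModulus α (smoothingScale s ρ t₀) |x₀ - y₀| := by
    linarith [hmax' x y t ht, mul_nonneg hκ.le (penalty_nonneg x₀),
      mul_nonneg hκ.le (penalty_nonneg y₀)]
  have hexcess' := mul_le_mul_of_nonneg_left hexcess (by positivity : 0 ≤ 6 * α)
  have hpos : 0 < 6 * α * (θ x t - θ y t - holderModulus α (smoothingScale s ρ t) |x - y| -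
      κ * (penalty x + penalty y)) := by
    linarith [mul_nonneg hM hκ.le]
  have hcontact := hθ.six_mul_sub_holderModulus_le (hbd · t₀ hz₀.2.2) hε hs' hα1 hαs hc hρ
    hκ.le hz₀.2.2 hmax' (by linarith [pos_of_mul_pos_right hpos (by positivity)])
  linarith

end Contact

section Limit

theorem exists_holder_extension {X : Type*} [PseudoMetricSpace X] {f : X → ℝ} {S : Set X}
    {C : NNReal} {α : ℝ} (hα : 0 < α) (hα' : α ≤ 1)
    (hf : ∀ x ∈ S, ∀ y ∈ S, f x - f y ≤ C * dist x y ^ α) :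
    ∃ g : X → ℝ, (∀ x y, |g x - g y| ≤ C * dist x y ^ α) ∧ EqOn f g S := by
  have hlip : LipschitzOnWith C (f ∘ Metric.Snowflaking.ofSnowflaking (hα₀ := hα) (hα₁ := hα'))
      (Metric.Snowflaking.ofSnowflaking ⁻¹' S) :=
    LipschitzOnWith.of_le_add_mul C fun x hx y hy => sub_le_iff_le_add'.1 (hf _ hx _ hy)
  obtain ⟨g, hg, hfg⟩ := hlip.extend_real
  exact ⟨g ∘ Metric.Snowflaking.toSnowflaking, fun x y => hg.dist_le_mul _ _,
    fun x hx => hfg (x := Metric.Snowflaking.toSnowflaking x) hx⟩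

theorem IsClassicalSolution.sub_le_two_mul_rpow {s ε α : ℝ} {θ : ℝ → ℝ → ℝ}
    (hθ : IsClassicalSolution s ε θ (univ ×ˢ Icc (-1) 0))
    (hbd : ∀ x, ∀ t ∈ Icc (-1) 0, |θ x t| ≤ 1) (hε : 0 ≤ ε) (hs' : s < 1 / 2)
    (hα1 : 1 - α ≤ 2 * s) (hαs : 4 * α < 2 * s - 1 / 2) (hc : 8 * α ≤ fracC s) (x y : ℝ) :
    θ x 0 - θ y 0 ≤ 2 * |x - y| ^ α := by
  have hα : 0 < α := by linarith
  have hs : 0 < s := by linarith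
  have hlim : Tendsto (fun ρ => holderModulus α (smoothingScale s ρ 0) |x - y|)
      (nhdsWithin 0 (Ioi 0)) (nhds (holderModulus α (smoothingScale s 0 0) |x - y|)) :=
    (((continuous_holderModulus_smoothingScale hs.le hα.le).comp
      (f := fun ρ : ℝ => (ρ, (0 : ℝ), |x - y|)) (by fun_prop)).tendsto 0).mono_left
      nhdsWithin_le_nhds
  have hzero : smoothingScale s 0 0 = 0 := by
    rw [smoothingScale, sub_self, zero_rpow (by positivity)]
  rw [hzero, holderModulus, add_zero] at hlim
  exact ge_of_tendsto hlim (eventually_mem_nhdsWithin.mono fun ρ hρ =>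
    hθ.sub_le_holderModulus hbd hε hs' hα1 hαs hc hρ ⟨by norm_num, le_rfl⟩ x y)

theorem holder_regularity_of_limit_general :
    ∃ α C : ℝ, 0 < α ∧ α < 1 / 2 ∧ 0 < C ∧
      ∀ s : ℝ, (1 - α) / 2 < s → s < 1 / 2 →
        ∀ {ι : Type*} (l : Filter ι) [l.NeBot] (ε : ι → ℝ), (∀ i, 0 ≤ ε i) →
          ∀ θ : ι → ℝ → ℝ → ℝ,
            (∀ i, IsClassicalSolution s (ε i) (θ i) (univ ×ˢ Icc (-1 : ℝ) 0)) →
            (∀ i, ∀ x : ℝ, ∀ t ∈ Icc (-1 : ℝ) 0, |θ i x t| ≤ 1) →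
            ∀ u : ℝ → ℝ, (∀ᵐ x : ℝ, Tendsto (fun i => θ i x 0) l (nhds (u x))) →
              ∃ v : ℝ → ℝ, (∀ x y : ℝ, |v x - v y| ≤ C * |x - y| ^ α) ∧ ∀ᵐ x : ℝ, u x = v x := by
  obtain ⟨c, η, hc, hη, hcη⟩ := exists_le_fracC_near (s₀ := 1 / 2) (by norm_num) (by norm_num)
  obtain ⟨α, hα, hα_lt⟩ := exists_between (lt_min (lt_min (by norm_num : (0 : ℝ) < 1 / 12) hη)
    (by positivity : 0 < c / 8))
  obtain ⟨⟨hα12, hαη⟩, hαc⟩ : (α < 1 / 12 ∧ α < η) ∧ α < c / 8 := by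
    simpa only [lt_min_iff] using hα_lt
  refine ⟨α, 2, hα, by linarith, two_pos, fun s hs hs' ι l _ ε hε θ hθ hbd u hu => ?_⟩
  have hcs : c ≤ fracC s := hcη s (abs_lt.2 ⟨by linarith, by linarith⟩)
  have hholder (i : ι) (x y : ℝ) : θ i x 0 - θ i y 0 ≤ 2 * |x - y| ^ α :=
    (hθ i).sub_le_two_mul_rpow (hbd i) (hε i) hs' (by linarith) (by linarith) (by linarith) x y
  obtain ⟨v, hv, huv⟩ := exists_holder_extension
    (S := {x | Tendsto (fun i => θ i x 0) l (nhds (u x))}) (C := 2) hα (by linarith)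
    fun x hx y hy => le_of_tendsto (hx.sub hy) (Eventually.of_forall fun i => hholder i x y)
  exact ⟨v, hv, hu.mono huv⟩

end Limit

/-- an a.e. limit of solutions of the regularized equations with vanishing
viscosities, bounded by `1`, agrees a.e. with a `C^α` function. -/
theorem holder_regularity_of_limit :
    ∃ α C : ℝ, 0 < α ∧ α < 1 / 2 ∧ 0 < C ∧
      ∀ s : ℝ, (1 - α) / 2 < s → s < 1 / 2 →
        ∀ ε : ℕ → ℝ, (∀ n, 0 < ε n) → Tendsto ε atTop (nhds 0) →
          ∀ θ : ℕ → ℝ → ℝ → ℝ,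
            (∀ n, IsClassicalSolution s (ε n) (θ n)
              (Set.univ ×ˢ Set.Icc (-1 : ℝ) 0)) →
            (∀ n, ∀ x : ℝ, ∀ t ∈ Set.Icc (-1 : ℝ) 0, |θ n x t| ≤ 1) →
            ∀ u : ℝ → ℝ,
              (∀ᵐ x : ℝ ∂volume, Tendsto (fun n => θ n x 0) atTop (nhds (u x))) →
              ∃ v : ℝ → ℝ,
                (∀ x y : ℝ, |v x - v y| ≤ C * |x - y| ^ α) ∧
                ∀ᵐ x : ℝ ∂volume, u x = v x := by
  obtain ⟨α, C, hα, hα', hC, h⟩ := holder_regularity_of_limit_general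
  exact ⟨α, C, hα, hα', hC, fun s hs hs' ε hε _ => h s hs hs' atTop ε fun n => (hε n).le⟩
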